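/- Let (Ω, P, π) be a finite irreducible lazy reversible Markov chain and let x, y, z ∈ Ω. Then for all t ≥ 0, P^t(x,y)/π(y) ≥ Σ_{k ≤ t} P[T_z^{x,y} = k] · P^{t-k}(z,z)/π(z) ≥ P[T_z^{x,y} ≤ t], where T_z^{x,y} is distributed as the sum of two independent copies of the hitting time T_z of z, one started from x and one started from y. -/

import Mathlib

open Finset

/-- `hitProb P z t x` is the probability that the chain with transition matrix `P`
started at `x` hits `z` for the first time exactly at time `t`, i.e. `P_x[T_z = t]`. -/
noncomputable def hitProb {Ω : Type*} [Fintype Ω] [DecidableEq Ω]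
    (P : Matrix Ω Ω ℝ) (z : Ω) : ℕ → Ω → ℝ
  | 0, x => if x = z then 1 else 0
  | (t + 1), x => if x = z then 0 else ∑ y, P x y * hitProb P z t y

/-- `hitConv P z x y k = P[T_z^{x,y} = k]`, the convolution of the hitting time
distributions of `z` started from `x` and from `y`. -/
noncomputable def hitConv {Ω : Type*} [Fintype Ω] [DecidableEq Ω]
    (P : Matrix Ω Ω ℝ) (z x y : Ω) (k : ℕ) : ℝ :=
  ∑ j ∈ Finset.range (k + 1), hitProb P z j x * hitProb P z (k - j) y


lemma hp_nonneg {Ω : Type*} [Fintype Ω] [DecidableEq Ω]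
    (P : Matrix Ω Ω ℝ) (hP0 : ∀ x y, 0 ≤ P x y) (z : Ω) (t : ℕ) :
    ∀ x, 0 ≤ hitProb P z t x := by
  induction t with
  | zero => intro x; simp only [hitProb]; split_ifs <;> norm_num
  | succ t ih =>
    intro x; simp only [hitProb]; split_ifs
    · norm_num
    · exact Finset.sum_nonneg fun u _ => mul_nonneg (hP0 _ _) (ih u)

lemma pow_nn {Ω : Type*} [Fintype Ω] [DecidableEq Ω]
    (P : Matrix Ω Ω ℝ) (hP0 : ∀ x y, 0 ≤ P x y) (t : ℕ) :
    ∀ x y, 0 ≤ (P ^ t) x y := by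
  induction t with
  | zero => intro x y; simp only [pow_zero, Matrix.one_apply]; split_ifs <;> norm_num
  | succ t ih =>
    intro x y; rw [pow_succ, Matrix.mul_apply]
    exact Finset.sum_nonneg fun u _ => mul_nonneg (ih _ _) (hP0 _ _)

lemma pow_row {Ω : Type*} [Fintype Ω] [DecidableEq Ω]
    (P : Matrix Ω Ω ℝ) (hP1 : ∀ x, ∑ y, P x y = 1) (t : ℕ) :
    ∀ x, ∑ y, (P ^ t) x y = 1 := by
  induction t with
  | zero => intro x; simp [Matrix.one_apply]
  | succ t ih =>
    intro x
    simp only [pow_succ, Matrix.mul_apply]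
    rw [Finset.sum_comm]
    simp only [← Finset.mul_sum, hP1, mul_one, ih]

lemma pow_rev {Ω : Type*} [Fintype Ω] [DecidableEq Ω]
    (P : Matrix Ω Ω ℝ) (π : Ω → ℝ) (hrev : ∀ x y, π x * P x y = π y * P y x) (t : ℕ) :
    ∀ x y, π x * (P ^ t) x y = π y * (P ^ t) y x := by
  induction t with
  | zero =>
    intro x y; simp only [pow_zero, Matrix.one_apply]
    by_cases h : x = y
    · simp [h]
    · simp [h, Ne.symm h]
  | succ t ih =>
    intro x y
    rw [pow_succ, Matrix.mul_apply, ← pow_succ, pow_succ', Matrix.mul_apply, Finset.mul_sum,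
      Finset.mul_sum]
    refine Finset.sum_congr rfl fun u _ => ?_
    rw [← mul_assoc, ih x u, mul_right_comm, hrev u y]
    ring

lemma first_hit {Ω : Type*} [Fintype Ω] [DecidableEq Ω]
    (P : Matrix Ω Ω ℝ) (hP0 : ∀ x y, 0 ≤ P x y) (z w : Ω) (t : ℕ) :
    ∀ x, ∑ j ∈ Finset.range (t + 1), hitProb P z j x * (P ^ (t - j)) z w ≤ (P ^ t) x w := by
  induction t with
  | zero =>
    intro x
    by_cases h : x = z
    · simp [hitProb, h]
    · simpa [hitProb, h] using pow_nn P hP0 0 x w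
  | succ t ih =>
    intro x
    rw [Finset.sum_range_succ']
    by_cases h : x = z
    · simp [hitProb, h]
    · simp only [hitProb, h, if_false, zero_mul, add_zero, Nat.add_sub_add_right]
      rw [pow_succ', Matrix.mul_apply]
      simp only [Finset.sum_mul]
      rw [Finset.sum_comm]
      refine Finset.sum_le_sum fun u _ => ?_
      simp only [mul_assoc]
      rw [← Finset.mul_sum]
      exact mul_le_mul_of_nonneg_left (ih u) (hP0 _ _)

lemma lazy_psd {Ω : Type*} [Fintype Ω] [DecidableEq Ω]
    (P : Matrix Ω Ω ℝ) (π : Ω → ℝ)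
    (hP0 : ∀ x y, 0 ≤ P x y) (hP1 : ∀ x, ∑ y, P x y = 1)
    (hπ0 : ∀ x, 0 < π x)
    (hrev : ∀ x y, π x * P x y = π y * P y x)
    (hlazy : ∀ x, (1 : ℝ) / 2 ≤ P x x) (g : Ω → ℝ) :
    0 ≤ ∑ u, ∑ w, π u * P u w * (g u * g w) := by
  have h1 : ∑ u, ∑ w, π u * P u w * (g u) ^ 2 = ∑ u, π u * g u ^ 2 := by
    refine Finset.sum_congr rfl fun u _ => ?_
    rw [← Finset.sum_mul, ← Finset.mul_sum, hP1, mul_one]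
  have h2 : ∑ u, ∑ w, π u * P u w * (g w) ^ 2 = ∑ u, π u * g u ^ 2 := by
    rw [Finset.sum_comm, ← h1]
    refine Finset.sum_congr rfl fun u _ => Finset.sum_congr rfl fun w _ => ?_
    rw [hrev]
  have h3 : ∑ u, ∑ w, π u * P u w * (g u + g w) ^ 2
      = 2 * (∑ u, π u * g u ^ 2) + 2 * ∑ u, ∑ w, π u * P u w * (g u * g w) := by
    have : ∑ u, ∑ w, π u * P u w * (g u + g w) ^ 2
      = ∑ u, ∑ w, π u * P u w * (g u) ^ 2 + ∑ u, ∑ w, π u * P u w * (g w) ^ 2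
        + 2 * ∑ u, ∑ w, π u * P u w * (g u * g w) := by
      simp only [Finset.mul_sum, ← Finset.sum_add_distrib]
      refine Finset.sum_congr rfl fun u _ => Finset.sum_congr rfl fun w _ => ?_
      ring
    rw [this, h1, h2]; ring
  have h4 : 2 * (∑ u, π u * g u ^ 2) ≤ ∑ u, ∑ w, π u * P u w * (g u + g w) ^ 2 := by
    rw [Finset.mul_sum]
    refine Finset.sum_le_sum fun u _ => ?_
    have h5 : π u * P u u * (g u + g u) ^ 2 ≤ ∑ w, π u * P u w * (g u + g w) ^ 2 :=
      Finset.single_le_sum (f := fun w => π u * P u w * (g u + g w) ^ 2)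
        (fun w _ => mul_nonneg (mul_nonneg (hπ0 u).le (hP0 _ _)) (sq_nonneg _))
        (Finset.mem_univ u)
    refine le_trans ?_ h5
    have h6 : 0 ≤ π u * g u ^ 2 := mul_nonneg (hπ0 u).le (sq_nonneg _)
    nlinarith [mul_le_mul_of_nonneg_right (hlazy u) h6]
  linarith

lemma diag_ge {Ω : Type*} [Fintype Ω] [DecidableEq Ω]
    (P : Matrix Ω Ω ℝ) (π : Ω → ℝ)
    (hP0 : ∀ x y, 0 ≤ P x y) (hP1 : ∀ x, ∑ y, P x y = 1)
    (hπ0 : ∀ x, 0 < π x) (hπ1 : ∑ x, π x = 1)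
    (hrev : ∀ x y, π x * P x y = π y * P y x)
    (hlazy : ∀ x, (1 : ℝ) / 2 ≤ P x x) (z : Ω) (s : ℕ) :
    1 ≤ (P ^ s) z z / π z := by
  have key : ∀ m w, (P ^ m) z w = π w * ((P ^ m) w z / π z) := by
    intro m w
    have := pow_rev P π hrev m z w
    have := (hπ0 z).ne'
    field_simp; linarith
  have mean : ∀ m, ∑ w, π w * ((P ^ m) w z / π z) = 1 := by
    intro m; simp only [← key]; exact pow_row P hP1 m z
  rcases Nat.even_or_odd' s with ⟨m, rfl | rfl⟩
  · set f : Ω → ℝ := fun w => (P ^ m) w z / π z with hf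
    have e : (P ^ (2 * m)) z z / π z = ∑ w, π w * f w ^ 2 := by
      rw [two_mul, pow_add, Matrix.mul_apply, Finset.sum_div]
      refine Finset.sum_congr rfl fun w _ => ?_
      rw [key m w]; simp only [hf]; ring
    have hm : ∑ w, π w * f w = 1 := mean m
    have h0 : 0 ≤ ∑ w, π w * (f w - 1) ^ 2 :=
      Finset.sum_nonneg fun w _ => mul_nonneg (hπ0 w).le (sq_nonneg _)
    have h1 : ∑ w, π w * (f w - 1) ^ 2
        = ∑ w, π w * f w ^ 2 - 2 * ∑ w, π w * f w + ∑ w, π w := by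
      rw [Finset.mul_sum, ← Finset.sum_sub_distrib, ← Finset.sum_add_distrib]
      refine Finset.sum_congr rfl fun w _ => ?_
      ring
    rw [e]; rw [hm, hπ1] at h1; linarith
  · set f : Ω → ℝ := fun w => (P ^ m) w z / π z with hf
    have e : (P ^ (2 * m + 1)) z z / π z = ∑ u, ∑ w, π u * P u w * (f u * f w) := by
      rw [show 2 * m + 1 = m + (1 + m) by ring, pow_add, Matrix.mul_apply, Finset.sum_div]
      refine Finset.sum_congr rfl fun u _ => ?_
      rw [pow_add, pow_one, Matrix.mul_apply, Finset.mul_sum, Finset.sum_div]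
      refine Finset.sum_congr rfl fun w _ => ?_
      rw [key m u]; simp only [hf]; ring
    have hm : ∑ w, π w * f w = 1 := mean m
    have h0 := lazy_psd P π hP0 hP1 hπ0 hrev hlazy (fun w => f w - 1)
    have a1 : ∑ u, ∑ w, π u * P u w * f u = 1 := by
      rw [← hm]
      refine Finset.sum_congr rfl fun u _ => ?_
      rw [← Finset.sum_mul, ← Finset.mul_sum, hP1, mul_one]
    have a2 : ∑ u, ∑ w, π u * P u w * f w = 1 := by
      rw [Finset.sum_comm, ← a1]
      refine Finset.sum_congr rfl fun u _ => Finset.sum_congr rfl fun w _ => ?_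
      rw [hrev]
    have a3 : ∑ u, ∑ w, π u * P u w = 1 := by
      simp only [← Finset.mul_sum, hP1, mul_one, hπ1]
    have h1 : ∑ u, ∑ w, π u * P u w * ((f u - 1) * (f w - 1))
        = ∑ u, ∑ w, π u * P u w * (f u * f w) - ∑ u, ∑ w, π u * P u w * f u
          - ∑ u, ∑ w, π u * P u w * f w + ∑ u, ∑ w, π u * P u w := by
      simp only [← Finset.sum_sub_distrib, ← Finset.sum_add_distrib]
      refine Finset.sum_congr rfl fun u _ => Finset.sum_congr rfl fun w _ => ?_
      ring
    rw [e]; rw [a1, a2, a3] at h1; linarith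

/-- For a finite irreducible lazy reversible Markov chain and
`x, y, z ∈ Ω`, for all `t ≥ 0`,
`P^t(x,y)/π(y) ≥ Σ_{k ≤ t} P[T_z^{x,y} = k]·P^{t-k}(z,z)/π(z) ≥ P[T_z^{x,y} ≤ t]`. -/
theorem stmt2 {Ω : Type*} [Fintype Ω] [Nonempty Ω] [DecidableEq Ω]
    (P : Matrix Ω Ω ℝ) (π : Ω → ℝ)
    (hP0 : ∀ x y, 0 ≤ P x y) (hP1 : ∀ x, ∑ y, P x y = 1)
    (hπ0 : ∀ x, 0 < π x) (hπ1 : ∑ x, π x = 1)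
    (hrev : ∀ x y, π x * P x y = π y * P y x)
    (hirr : ∀ x y, ∃ t : ℕ, 0 < (P ^ t) x y)
    (hlazy : ∀ x, (1 : ℝ) / 2 ≤ P x x)
    (x y z : Ω) (t : ℕ) :
    (P ^ t) x y / π y ≥
        ∑ k ∈ Finset.range (t + 1), hitConv P z x y k * ((P ^ (t - k)) z z / π z)
      ∧
    ∑ k ∈ Finset.range (t + 1), hitConv P z x y k * ((P ^ (t - k)) z z / π z) ≥
        ∑ k ∈ Finset.range (t + 1), hitConv P z x y k := by
  have hn := hp_nonneg P hP0 z
  constructor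
  · have hz := hπ0 z
    have hy := hπ0 y
    have e1 : ∑ k ∈ Finset.range (t + 1), hitConv P z x y k * ((P ^ (t - k)) z z / π z)
        = ∑ j ∈ Finset.range (t + 1), ∑ i ∈ Finset.range (t + 1 - j),
          hitProb P z j x * hitProb P z i y * ((P ^ (t - j - i)) z z / π z) := by
      rw [← Finset.sum_range_diag_flip (t + 1) (fun j i =>
        hitProb P z j x * hitProb P z i y * ((P ^ (t - j - i)) z z / π z))]
      refine Finset.sum_congr rfl fun k _ => ?_
      rw [hitConv, Finset.sum_mul]
      refine Finset.sum_congr rfl fun j hj => ?_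
      have : j < k + 1 := Finset.mem_range.mp hj
      rw [show t - j - (k - j) = t - k by omega]
    rw [e1, ge_iff_le]
    calc _ ≤ ∑ j ∈ Finset.range (t + 1), hitProb P z j x * ((P ^ (t - j)) z y / π y) := by
          refine Finset.sum_le_sum fun j hj => ?_
          have hj' : j < t + 1 := Finset.mem_range.mp hj
          have e2 : (P ^ (t - j)) z y / π y = (P ^ (t - j)) y z / π z := by
            have := pow_rev P π hrev (t - j) z y
            rw [div_eq_div_iff hy.ne' hz.ne']; linarith
          rw [e2, show t + 1 - j = t - j + 1 by omega]
          simp only [mul_assoc]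
          rw [← Finset.mul_sum]
          refine mul_le_mul_of_nonneg_left ?_ (hn j x)
          simp only [← mul_div_assoc]
          rw [← Finset.sum_div]
          exact div_le_div_of_nonneg_right (first_hit P hP0 z z (t - j) y) hz.le
      _ ≤ _ := by
          simp only [← mul_div_assoc]
          rw [← Finset.sum_div]
          exact div_le_div_of_nonneg_right (first_hit P hP0 z y t x) hy.le
  · refine Finset.sum_le_sum fun k _ => ?_
    refine le_mul_of_one_le_right ?_ (diag_ge P π hP0 hP1 hπ0 hπ1 hrev hlazy z (t - k))
    exact Finset.sum_nonneg fun j _ => mul_nonneg (hn _ _) (hn _ _)
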